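/- The clones TN := Pol({0,1,2}; C_3, T, N, N*) and DM := Pol({0,1,2}; C_3, C_2, ≤_2) are minor equivalent: there exist a minor-preserving map from DM to TN and a minor-preserving map from TN to DM. -/

import Mathlib

/-!
On `{0,1}` an operation `f` of `DM` is monotone and self-dual, so the sets `S` of coordinates with
`f 1_S = 1` form an upward closed family containing exactly one of `S` and `Sᶜ`; call them winning.
Any two winning sets meet, hence for every `x` at most one value `i` has a winning level set
`x⁻¹{i}`. Sending `f` to the operation that elects this `i`, and falls back to the affine expression
`f (-x) - f x` when no level set wins, is a minor-preserving map to `TN`: the expression commutes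
with `x ↦ x + 1` and `x ↦ 1 - x` because `f` commutes with `x ↦ x + 1`, while `N` and `N*` only see
tuples over `{0,1}` in their first coordinate, where some level set always wins.
In the other direction, `TN ⊆ DM` because `C₂` and `≤₂` are pp-definable from `T` and `N*`.
-/

/-- The three-element domain `{0,1,2}`. -/
abbrev D3 : Type := Fin 3

/-- `n`-ary operations on `{0,1,2}`. -/
abbrev Op (n : ℕ) : Type := (Fin n → D3) → D3

/-- An `n`-ary operation `f` preserves a `k`-ary relation `R`. -/
def Preserves {n k : ℕ} (f : Op n) (R : Set (Fin k → D3)) : Prop :=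
  ∀ t : Fin n → (Fin k → D3), (∀ i, t i ∈ R) → (fun j => f fun i => t i j) ∈ R

/-- `C₃ = {(0,1),(1,2),(2,0)}`. -/
def C3rel : Set (Fin 2 → D3) :=
  { t | (t 0 = 0 ∧ t 1 = 1) ∨ (t 0 = 1 ∧ t 1 = 2) ∨ (t 0 = 2 ∧ t 1 = 0) }

/-- `T = {(0,1),(1,0),(2,2)}`. -/
def Trel : Set (Fin 2 → D3) :=
  { t | (t 0 = 0 ∧ t 1 = 1) ∨ (t 0 = 1 ∧ t 1 = 0) ∨ (t 0 = 2 ∧ t 1 = 2) }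

/-- `N = {(0,0),(1,0),(1,1),(1,2)}`. -/
def Nrel : Set (Fin 2 → D3) :=
  { t | (t 0 = 0 ∧ t 1 = 0) ∨ (t 0 = 1 ∧ t 1 = 0) ∨ (t 0 = 1 ∧ t 1 = 1) ∨ (t 0 = 1 ∧ t 1 = 2) }

/-- `N* = {(0,0),(0,1),(1,1),(0,2)}`. -/
def Nstarrel : Set (Fin 2 → D3) :=
  { t | (t 0 = 0 ∧ t 1 = 0) ∨ (t 0 = 0 ∧ t 1 = 1) ∨ (t 0 = 1 ∧ t 1 = 1) ∨ (t 0 = 0 ∧ t 1 = 2) }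

/-- `C₂ = {(0,1),(1,0)}`. -/
def C2rel : Set (Fin 2 → D3) :=
  { t | (t 0 = 0 ∧ t 1 = 1) ∨ (t 0 = 1 ∧ t 1 = 0) }

/-- `≤₂ = {(0,0),(0,1),(1,1)}`. -/
def le2rel : Set (Fin 2 → D3) :=
  { t | (t 0 = 0 ∧ t 1 = 0) ∨ (t 0 = 0 ∧ t 1 = 1) ∨ (t 0 = 1 ∧ t 1 = 1) }

/-- The polymorphism clone of a family of relations on `{0,1,2}`. -/
def Pol (A : Set (Σ k : ℕ, Set (Fin k → D3))) : ∀ n, Set (Op n) :=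
  fun n => { f | ∀ R ∈ A, Preserves f R.2 }

/-- The clone `TN = Pol({0,1,2}; C₃, T, N, N*)`. -/
def TNclone : ∀ n, Set (Op n) :=
  Pol ({⟨2, C3rel⟩, ⟨2, Trel⟩, ⟨2, Nrel⟩, ⟨2, Nstarrel⟩} : Set (Σ k : ℕ, Set (Fin k → D3)))

/-- The clone `DM = Pol({0,1,2}; C₃, C₂, ≤₂)`. -/
def DMclone : ∀ n, Set (Op n) :=
  Pol ({⟨2, C3rel⟩, ⟨2, C2rel⟩, ⟨2, le2rel⟩} : Set (Σ k : ℕ, Set (Fin k → D3)))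

/-- The minor `f_π` of an `n`-ary operation `f` along `π`. -/
def minor {n r : ℕ} (f : Op n) (π : Fin n → Fin r) : Op r :=
  fun x => f fun i => x (π i)

/-- `ξ` is a minor-preserving map from `C` to `D`. -/
def IsMinorHom (C D : ∀ n, Set (Op n)) (ξ : ∀ n, Op n → Op n) : Prop :=
  (∀ n, ∀ f ∈ C n, ξ n f ∈ D n) ∧
  (∀ (n r : ℕ) (f : Op n) (π : Fin n → Fin r), f ∈ C n → ξ r (minor f π) = minor (ξ n f) π)

section Relations

variable {n k : ℕ} {f : Op n}

lemma preserves_setOf_iff {r : D3 → D3 → Prop} :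
    Preserves f {t : Fin 2 → D3 | r (t 0) (t 1)} ↔
      ∀ x y : Fin n → D3, (∀ i, r (x i) (y i)) → r (f x) (f y) :=
  ⟨fun h x y hxy => h (fun i => ![x i, y i]) hxy, fun h _ ht => h _ _ ht⟩

lemma preserves_graph_iff {φ : D3 → D3} :
    Preserves f {t : Fin 2 → D3 | t 1 = φ (t 0)} ↔ ∀ x, f (φ ∘ x) = φ (f x) := by
  rw [preserves_setOf_iff (r := fun a b => b = φ a)]
  refine ⟨fun h x => h x _ fun _ => rfl, fun h x y hxy => ?_⟩
  rw [← h x, funext hxy, Function.comp_def]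

lemma Preserves.inter {R S : Set (Fin k → D3)} (hR : Preserves f R) (hS : Preserves f S) :
    Preserves f (R ∩ S) :=
  fun t ht => ⟨hR t fun i => (ht i).1, hS t fun i => (ht i).2⟩

lemma C3rel_eq_setOf : C3rel = {t | t 1 = t 0 + 1} := by
  ext t
  simp only [C3rel, Set.mem_ofPred_eq]
  generalize t 0 = a, t 1 = b
  decide +revert

lemma Trel_eq_setOf : Trel = {t | t 1 = 1 - t 0} := by
  ext t
  simp only [Trel, Set.mem_ofPred_eq]
  generalize t 0 = a, t 1 = b
  decide +revert

lemma Nrel_eq_setOf : Nrel = {t | t 0 ≠ 2 ∧ (t 0 = 0 → t 1 = 0)} := by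
  ext t
  simp only [Nrel, Set.mem_ofPred_eq]
  generalize t 0 = a, t 1 = b
  decide +revert

lemma Nstarrel_eq_setOf : Nstarrel = {t | t 0 ≠ 2 ∧ (t 0 = 1 → t 1 = 1)} := by
  ext t
  simp only [Nstarrel, Set.mem_ofPred_eq]
  generalize t 0 = a, t 1 = b
  decide +revert

lemma C2rel_eq_inter : C2rel = Trel ∩ {t | t 0 ≠ 2} := by
  ext t
  simp only [C2rel, Trel, Set.mem_inter_iff, Set.mem_ofPred_eq]
  generalize t 0 = a, t 1 = b
  decide +revert

lemma le2rel_eq_inter : le2rel = Nstarrel ∩ {t | t 1 ≠ 2} := by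
  ext t
  simp only [le2rel, Nstarrel, Set.mem_inter_iff, Set.mem_ofPred_eq]
  generalize t 0 = a, t 1 = b
  decide +revert

lemma preserves_C3rel_iff : Preserves f C3rel ↔ ∀ x, f (x + 1) = f x + 1 := by
  rw [C3rel_eq_setOf]
  exact preserves_graph_iff (φ := (· + 1))

lemma Preserves.map_sub_one (hC3 : Preserves f C3rel) (x : Fin n → D3) :
    f (x - 1) = f x - 1 := by
  rw [eq_sub_iff_add_eq, ← preserves_C3rel_iff.1 hC3, sub_add_cancel]

lemma preserves_Trel_iff : Preserves f Trel ↔ ∀ x, f (1 - x) = 1 - f x := by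
  rw [Trel_eq_setOf]
  exact preserves_graph_iff (φ := (1 - ·))

lemma mem_TNclone_iff :
    f ∈ TNclone n ↔
      Preserves f C3rel ∧ Preserves f Trel ∧ Preserves f Nrel ∧ Preserves f Nstarrel := by
  simp [TNclone, Pol]

lemma mem_DMclone_iff :
    f ∈ DMclone n ↔ Preserves f C3rel ∧ Preserves f C2rel ∧ Preserves f le2rel := by
  simp [DMclone, Pol]

lemma Preserves.setOf_ne_two (hN : Preserves f Nstarrel) (c : Fin k) :
    Preserves f {t | t c ≠ 2} := by
  rw [Nstarrel_eq_setOf,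
    preserves_setOf_iff (r := fun a b : D3 => a ≠ 2 ∧ (a = 1 → b = 1))] at hN
  exact fun t ht => (hN (t · c) (t · c) fun i => ⟨ht i, id⟩).1

lemma TNclone_subset_DMclone : TNclone n ⊆ DMclone n := by
  intro f hf
  obtain ⟨hC3, hT, -, hN⟩ := mem_TNclone_iff.1 hf
  have hC2 : Preserves f C2rel := C2rel_eq_inter ▸ hT.inter (hN.setOf_ne_two 0)
  have hle : Preserves f le2rel := le2rel_eq_inter ▸ hN.inter (hN.setOf_ne_two 1)
  exact mem_DMclone_iff.2 ⟨hC3, hC2, hle⟩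

end Relations

section Winning

variable {n : ℕ} {f : Op n} {S S' : Set (Fin n)}

/-- The winning coalitions of `f`: the sets of coordinates whose characteristic tuple is mapped
to `1`. They encode the restriction to `{0,1}` of an operation preserving `C₂`. -/
def IsWinning (f : Op n) (S : Set (Fin n)) : Prop :=
  f (S.indicator 1) = 1

lemma IsWinning.mono (hle : Preserves f le2rel) (hS : IsWinning f S) (hSS' : S ⊆ S') :
    IsWinning f S' := by
  have hmem : ∀ j, ![S.indicator 1 j, S'.indicator 1 j] ∈ le2rel := by
    intro j
    by_cases hj : j ∈ S
    · simp [le2rel, hj, hSS' hj]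
    · simpa [le2rel, hj] using S'.indicator_eq_zero_or_self (1 : Fin n → D3) j
  have himage := hle _ hmem
  unfold IsWinning at hS ⊢
  simpa [le2rel, hS] using himage

lemma isWinning_compl_iff (hC2 : Preserves f C2rel) : IsWinning f Sᶜ ↔ ¬IsWinning f S := by
  have hmem : ∀ j, ![S.indicator 1 j, Sᶜ.indicator 1 j] ∈ C2rel := by
    intro j
    by_cases hj : j ∈ S <;> simp [C2rel, hj]
  have himage := hC2 _ hmem
  rcases himage with ⟨h₀, h₁⟩ | ⟨h₁, h₀⟩ <;> simp_all [IsWinning]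

lemma IsWinning.inter_nonempty (hC2 : Preserves f C2rel) (hle : Preserves f le2rel)
    (hS : IsWinning f S) (hS' : IsWinning f S') : (S ∩ S').Nonempty := by
  rw [← Set.not_disjoint_iff_nonempty_inter]
  intro hdisj
  exact (isWinning_compl_iff hC2).1 (hS.mono hle hdisj.subset_compl_right) hS'

lemma IsWinning.preimage_singleton_unique (hC2 : Preserves f C2rel) (hle : Preserves f le2rel)
    {x : Fin n → D3} {i j : D3} (hi : IsWinning f (x ⁻¹' {i})) (hj : IsWinning f (x ⁻¹' {j})) :
    i = j := by
  obtain ⟨c, hci, hcj⟩ := hi.inter_nonempty hC2 hle hj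
  exact hci.symm.trans hcj

lemma exists_isWinning_preimage_singleton (hC2 : Preserves f C2rel) {x : Fin n → D3}
    (hx : ∀ j, x j ≠ 2) : ∃ i ≠ 2, IsWinning f (x ⁻¹' {i}) := by
  have hcompl : x ⁻¹' {0} = (x ⁻¹' {1})ᶜ := by
    ext j
    have zero_iff : ∀ a : D3, a ≠ 2 → (a = 0 ↔ ¬a = 1) := by decide
    exact zero_iff _ (hx j)
  by_cases h : IsWinning f (x ⁻¹' {1})
  · exact ⟨1, by decide, h⟩
  · exact ⟨0, by decide, hcompl ▸ (isWinning_compl_iff hC2).2 h⟩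

end Winning

section Elect

variable {n r : ℕ} {f : Op n} {x : Fin n → D3}

open scoped Classical in
/-- The image of `f` under the minor-preserving map from `DM` to `TN`: the value of `x` whose level
set is winning for `f`, and `f (-x) - f x` if there is none. Negation and subtraction are those of
`ℤ/3ℤ`. -/
noncomputable def elect (f : Op n) : Op n := fun x =>
  if h : ∃ i, IsWinning f (x ⁻¹' {i}) then h.choose else f (-x) - f x

lemma elect_minor (f : Op n) (π : Fin n → Fin r) : elect (minor f π) = minor (elect f) π :=
  rfl

lemma elect_eq_of_isWinning (hC2 : Preserves f C2rel) (hle : Preserves f le2rel) {i : D3}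
    (hi : IsWinning f (x ⁻¹' {i})) : elect f x = i := by
  have h : ∃ i, IsWinning f (x ⁻¹' {i}) := ⟨i, hi⟩
  rw [elect, dif_pos h]
  exact h.choose_spec.preimage_singleton_unique hC2 hle hi

lemma elect_eq_sub (h : ¬∃ i, IsWinning f (x ⁻¹' {i})) : elect f x = f (-x) - f x :=
  dif_neg h

lemma elect_comp_perm (hC2 : Preserves f C2rel) (hle : Preserves f le2rel) (σ : Equiv.Perm D3)
    (hσ : f (-(σ ∘ x)) - f (σ ∘ x) = σ (f (-x) - f x)) :
    elect f (σ ∘ x) = σ (elect f x) := by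
  have hpre (i : D3) : (σ ∘ x) ⁻¹' {σ i} = x ⁻¹' {i} := by
    ext j
    simp
  by_cases h : ∃ i, IsWinning f (x ⁻¹' {i})
  · obtain ⟨i, hi⟩ := h
    rw [elect_eq_of_isWinning hC2 hle hi]
    exact elect_eq_of_isWinning hC2 hle ((hpre i).symm ▸ hi)
  · have hcomp : ¬∃ i, IsWinning f ((σ ∘ x) ⁻¹' {i}) := by
      rw [← σ.exists_congr_right]
      simpa only [hpre] using h
    rw [elect_eq_sub h, elect_eq_sub hcomp, hσ]

lemma elect_add_one (hC3 : Preserves f C3rel) (hC2 : Preserves f C2rel)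
    (hle : Preserves f le2rel) (x : Fin n → D3) : elect f (x + 1) = elect f x + 1 := by
  refine elect_comp_perm hC2 hle (Equiv.addRight 1) ?_
  change f (-(x + 1)) - f (x + 1) = f (-x) - f x + 1
  rw [neg_add', hC3.map_sub_one, preserves_C3rel_iff.1 hC3]
  generalize f (-x) = a, f x = b
  decide +revert

lemma elect_one_sub (hC3 : Preserves f C3rel) (hC2 : Preserves f C2rel)
    (hle : Preserves f le2rel) (x : Fin n → D3) : elect f (1 - x) = 1 - elect f x := by
  refine elect_comp_perm hC2 hle (Equiv.subLeft 1) ?_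
  change f (-(1 - x)) - f (1 - x) = 1 - (f (-x) - f x)
  rw [neg_sub, hC3.map_sub_one, sub_eq_neg_add 1 x, preserves_C3rel_iff.1 hC3]
  generalize f (-x) = a, f x = b
  decide +revert

lemma preserves_elect_setOf (hC2 : Preserves f C2rel) (hle : Preserves f le2rel) (i : D3) :
    Preserves (elect f) {t : Fin 2 → D3 | t 0 ≠ 2 ∧ (t 0 = i → t 1 = i)} := by
  rw [preserves_setOf_iff (r := fun a b => a ≠ 2 ∧ (a = i → b = i))]
  intro x y hxy
  obtain ⟨a, ha, hwin⟩ := exists_isWinning_preimage_singleton hC2 fun j => (hxy j).1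
  rw [elect_eq_of_isWinning hC2 hle hwin]
  refine ⟨ha, ?_⟩
  rintro rfl
  exact elect_eq_of_isWinning hC2 hle (hwin.mono hle fun j => (hxy j).2)

lemma elect_mem_TNclone (hf : f ∈ DMclone n) : elect f ∈ TNclone n := by
  obtain ⟨hC3, hC2, hle⟩ := mem_DMclone_iff.1 hf
  refine mem_TNclone_iff.2 ⟨?_, ?_, ?_, ?_⟩
  · exact preserves_C3rel_iff.2 (elect_add_one hC3 hC2 hle)
  · exact preserves_Trel_iff.2 (elect_one_sub hC3 hC2 hle)
  · exact Nrel_eq_setOf ▸ preserves_elect_setOf hC2 hle 0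
  · exact Nstarrel_eq_setOf ▸ preserves_elect_setOf hC2 hle 1

end Elect

/-- The clones `TN` and `DM` are minor equivalent. -/
theorem stmt9 :
    (∃ ξ, IsMinorHom DMclone TNclone ξ) ∧ (∃ ξ, IsMinorHom TNclone DMclone ξ) := by
  exact ⟨⟨fun _ => elect, fun _ _ => elect_mem_TNclone, fun _ _ f π _ => elect_minor f π⟩,
    ⟨fun _ => id, fun _ _ hf => TNclone_subset_DMclone hf, fun _ _ _ _ _ => rfl⟩⟩
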